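/- (Correctness of the reduction proving NP-completeness of the Lowest Cover Weight Codeword Problem) Let G ∈ F_q^{k×n} with rows g_1, …, g_k, let t ≤ n be a positive integer, and for each i define G_i ∈ F_q^{(t+1)×n} as the matrix obtained by stacking the row g_i exactly t+1 times. Then there exists a nonzero x ∈ F_q^k with Hamming weight wt_H(xG) ≤ t if and only if there exists a nonzero u ∈ F_q^k with cover weight wt_C(u_1 G_1 + ⋯ + u_k G_k) ≤ t. -/

import Mathlib

/-- A cover of a matrix `A` is a set of lines (rows, encoded as `Sum.inl`, and
columns, encoded as `Sum.inr`) such that every nonzero entry of `A` lies in one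
of these lines. -/
def IsCover {F : Type*} [Field F] {m n : ℕ} (A : Matrix (Fin m) (Fin n) F)
    (S : Finset (Fin m ⊕ Fin n)) : Prop :=
  ∀ i j, A i j ≠ 0 → Sum.inl i ∈ S ∨ Sum.inr j ∈ S

/-- The cover weight of a matrix: the minimum cardinality of a cover. -/
noncomputable def coverWt {F : Type*} [Field F] {m n : ℕ}
    (A : Matrix (Fin m) (Fin n) F) : ℕ :=
  sInf {c | ∃ S : Finset (Fin m ⊕ Fin n), IsCover A S ∧ S.card = c}

/-!
Stacking `m` copies of a row `v` gives a matrix of cover weight `min m (wt_H v)`: a cover either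
contains all `m` rows, or misses one of them and must then contain every column of the support of
`v`. With `t < m` copies the first kind of cover is too expensive, and `u_1 G_1 + ⋯ + u_k G_k` is
the stacking of the codeword `uG`.
-/

open Matrix in
theorem sum_smul_replicateRow {ι κ ν R : Type*} [Fintype ι] [NonUnitalNonAssocSemiring R]
    (u : ι → R) (G : Matrix ι ν R) :
    ∑ i, u i • replicateRow κ (G i) = replicateRow κ (u ᵥ* G) := by
  ext
  simp [Matrix.sum_apply, vecMul_eq_sum]

theorem card_le_card_of_forall_inl_mem {α β : Type*} [Fintype α] {S : Finset (α ⊕ β)}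
    (hS : ∀ a, Sum.inl a ∈ S) : Fintype.card α ≤ S.card := by
  have hleft : S.toLeft = Finset.univ := by simpa [Finset.eq_univ_iff_forall] using hS
  simpa [hleft] using S.card_toLeft_le

section Cover

variable {F : Type*} [Field F] {m n : ℕ} {A : Matrix (Fin m) (Fin n) F}
  {S : Finset (Fin m ⊕ Fin n)}

theorem isCover_univ_map_inl (A : Matrix (Fin m) (Fin n) F) :
    IsCover A (Finset.univ.map .inl) :=
  fun i _ _ => .inl (Finset.mem_map_of_mem _ (Finset.mem_univ i))

theorem IsCover.coverWt_le_card (hS : IsCover A S) : coverWt A ≤ S.card :=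
  Nat.sInf_le ⟨S, hS, rfl⟩

theorem exists_isCover_card_eq_coverWt (A : Matrix (Fin m) (Fin n) F) :
    ∃ S, IsCover A S ∧ S.card = coverWt A :=
  Nat.sInf_mem (s := {c | ∃ S, IsCover A S ∧ S.card = c}) ⟨_, _, isCover_univ_map_inl A, rfl⟩

theorem coverWt_le_card_rows (A : Matrix (Fin m) (Fin n) F) : coverWt A ≤ m := by
  simpa using (isCover_univ_map_inl A).coverWt_le_card

variable [DecidableEq F]

theorem IsCover.hammingNorm_row_le_card (hS : IsCover A S) {i : Fin m} (hi : Sum.inl i ∉ S) :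
    hammingNorm (A i) ≤ S.card := by
  have hsupport : ({j | A i j ≠ 0} : Finset (Fin n)) ⊆ S.toRight := fun j hj =>
    Finset.mem_toRight.2 ((hS i j (by simpa using hj)).resolve_left hi)
  exact (Finset.card_le_card hsupport).trans S.card_toRight_le

theorem coverWt_replicateRow_le_hammingNorm (v : Fin n → F) :
    coverWt (Matrix.replicateRow (Fin m) v) ≤ hammingNorm v := by
  have hcover : IsCover (Matrix.replicateRow (Fin m) v)
      (({j | v j ≠ 0} : Finset (Fin n)).map .inr) :=
    fun _ j hj => .inr (Finset.mem_map_of_mem _ (by simpa using hj))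
  exact hcover.coverWt_le_card.trans_eq (Finset.card_map _)

theorem coverWt_replicateRow (v : Fin n → F) :
    coverWt (Matrix.replicateRow (Fin m) v) = min m (hammingNorm v) := by
  apply le_antisymm
  · exact le_min (coverWt_le_card_rows _) (coverWt_replicateRow_le_hammingNorm v)
  · obtain ⟨S, hS, hcard⟩ := exists_isCover_card_eq_coverWt (Matrix.replicateRow (Fin m) v)
    rw [← hcard, min_le_iff]
    by_cases hrows : ∀ i, Sum.inl i ∈ S
    · exact .inl (by simpa using card_le_card_of_forall_inl_mem hrows)
    · obtain ⟨i, hi⟩ := not_forall.1 hrows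
      exact .inr (hS.hammingNorm_row_le_card hi)

end Cover

open Matrix in
theorem lowest_cover_weight_reduction_general {F ι : Type*} [Field F] [DecidableEq F] [Fintype ι]
    {m n t : ℕ} (htm : t < m) (G : Matrix ι (Fin n) F) :
    (∃ x : ι → F, x ≠ 0 ∧ hammingNorm (x ᵥ* G) ≤ t) ↔
    (∃ u : ι → F, u ≠ 0 ∧ coverWt (∑ i, u i • replicateRow (Fin m) (G i)) ≤ t) := by
  simp only [sum_smul_replicateRow, coverWt_replicateRow, min_le_iff, htm.not_ge, false_or]

open Matrix in
/-- Correctness of the reduction from the Lowest Hamming Weight Codeword Problem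
to the Lowest Cover Weight Codeword Problem: with `G_i ∈ F_q^{(t+1)×n}` obtained
by stacking the `i`-th row `g_i` of `G` exactly `t+1` times, there is a nonzero
`x` with `wt_H(xG) ≤ t` iff there is a nonzero `u` with
`wt_C(u_1 G_1 + ⋯ + u_k G_k) ≤ t`. -/
theorem lowest_cover_weight_reduction {F : Type*} [Field F] [Fintype F]
    [DecidableEq F] {q k n t : ℕ} (hq : Fintype.card F = q)
    (G : Matrix (Fin k) (Fin n) F) (ht : 0 < t) (htn : t ≤ n) :
    (∃ x : Fin k → F, x ≠ 0 ∧ hammingNorm (x ᵥ* G) ≤ t) ↔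
    (∃ u : Fin k → F, u ≠ 0 ∧
      coverWt (∑ i, u i • (Matrix.of fun _ : Fin (t + 1) => G i)) ≤ t) :=
  lowest_cover_weight_reduction_general t.lt_succ_self G
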